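/- For every n ≥ 0 the following sequence is exact: 0 → Ĥ^n_e → H^n_m → H^{n+1}_m → Ĥ^{n+1}_f → 0, where: the first map sends the class (modulo Ĥ^n_f) of a D-cocycle φ + η (φ ∈ C^n_1, η ∈ C^n_m) to the class of τ(φ) in H^n_m (this assignment is well defined); the second map is induced by λ^{(1)} + ρ^{(1)} on cocycles (which is well defined on cohomology); and the third map is the natural surjection of H^{n+1}_m onto Ĥ^{n+1}_f. Consequently dim_ℂ Ĥ^{n+1}_f = dim_ℂ Ĥ^n_e + (r+s−2)(r+s−1)^n. -/

import Mathlib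

open Finsupp Submodule LinearMap

set_option maxSynthPendingDepth 2

namespace NilpotentCohomology

/-- The big space of cochains of all degrees: formal ℂ-linear combinations of
basis symbols `φ^I_x` indexed by a multi-index `I : List (Fin m)` and an output
index `x : Fin m`. -/
abbrev Cochain (m : ℕ) : Type := (List (Fin m) × Fin m) →₀ ℂ

/-- Parity of an index: `0` if the index is among the first `r` (even) ones, `1` otherwise. -/
def par (r : ℕ) {m : ℕ} (i : Fin m) : ℕ := if (i : ℕ) < r then 0 else 1

/-- Parity of a multi-index: the sum of the parities of its entries. -/
def lpar (r : ℕ) {m : ℕ} (I : List (Fin m)) : ℕ := (I.map (par r)).sum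

/-- Parity of a basis cochain `φ^I_x`: `|I| + |x|`. -/
def ppar (r : ℕ) {m : ℕ} (p : List (Fin m) × Fin m) : ℕ := lpar r p.1 + par r p.2

/-- `(I, J, k)`: the multi-index `I` with its `k`-th entry (0-indexed) replaced by the string `J`. -/
def insertAt {m : ℕ} (I J : List (Fin m)) (k : ℕ) : List (Fin m) :=
  I.take k ++ J ++ I.drop (k + 1)

/-- The insertion product of two basis cochains `φ^I_x ∘ φ^J_y`. -/
noncomputable def basisComp (r : ℕ) {m : ℕ} (p q : List (Fin m) × Fin m) : Cochain m :=
  ∑ k : Fin p.1.length,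
    if p.1.get k = q.2 then
      ((-1 : ℂ) ^ (lpar r (p.1.take ((k : ℕ) + 1)) * ppar r q)) •
        Finsupp.single (insertAt p.1 q.1 (k : ℕ), p.2) (1 : ℂ)
    else 0

/-- The insertion product, extended bilinearly. -/
noncomputable def comp (r : ℕ) {m : ℕ} :
    Cochain m →ₗ[ℂ] Cochain m →ₗ[ℂ] Cochain m :=
  Finsupp.lsum ℂ fun p => LinearMap.toSpanSingleton ℂ _
    (Finsupp.lsum ℂ fun q => LinearMap.toSpanSingleton ℂ (Cochain m) (basisComp r p q))

/-- The bracket `[φ, ψ] = φ∘ψ − (−1)^{|φ||ψ|} ψ∘φ` of two parity-homogeneous cochains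
of parities `pf` and `pg`. -/
noncomputable def bracket (r : ℕ) {m : ℕ} (pf pg : ℕ) (f g : Cochain m) : Cochain m :=
  comp r f g - ((-1 : ℂ) ^ (pf * pg)) • comp r g f

/-- The quadratic cochain `φ^{(a,a)}_b`. -/
noncomputable def dd {m : ℕ} (a b : Fin m) : Cochain m :=
  Finsupp.single ([a, a], b) (1 : ℂ)

/-- The linear map multiplying each basis cochain by `(−1)^{its parity}`. -/
noncomputable def twist (r : ℕ) {m : ℕ} : Cochain m →ₗ[ℂ] Cochain m :=
  Finsupp.lsum ℂ fun p => LinearMap.toSpanSingleton ℂ (Cochain m)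
    (((-1 : ℂ) ^ (ppar r p)) • Finsupp.single p (1 : ℂ))

/-- The coboundary operator `D(φ) = [d, φ] = d∘φ − (−1)^{|d||φ|} φ∘d` for the odd
codifferential `d = φ^{(a,a)}_b`, extended linearly from parity-homogeneous `φ`. -/
noncomputable def Dop (r : ℕ) {m : ℕ} (a b : Fin m) : Cochain m →ₗ[ℂ] Cochain m :=
  comp r (dd a b) - ((comp r).flip (dd a b)) ∘ₗ twist r

/-- `C^n`: the span of the basis cochains `φ^I_x` with `I` of length `n`. -/
noncomputable def Cn (m n : ℕ) : Submodule ℂ (Cochain m) :=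
  Submodule.span ℂ
    {f | ∃ I : List (Fin m), I.length = n ∧ ∃ x : Fin m, f = Finsupp.single (I, x) 1}

/-- `C^n_x`: the span of the basis cochains `φ^I_x` with `I` of length `n` and output `x`. -/
noncomputable def Cnx (m : ℕ) (n : ℕ) (x : Fin m) : Submodule ℂ (Cochain m) :=
  Submodule.span ℂ
    {f | ∃ I : List (Fin m), I.length = n ∧ f = Finsupp.single (I, x) 1}

/-- The projection onto the cochains with output index `x`. -/
noncomputable def projOut {m : ℕ} (x : Fin m) : Cochain m →ₗ[ℂ] Cochain m :=
  Finsupp.lsum ℂ fun p => LinearMap.toSpanSingleton ℂ (Cochain m)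
    (if p.2 = x then Finsupp.single p (1 : ℂ) else 0)

/-- `λ^J (φ^I_x) = φ^{JI}_x`, extended linearly. -/
noncomputable def lam {m : ℕ} (J : List (Fin m)) : Cochain m →ₗ[ℂ] Cochain m :=
  Finsupp.lsum ℂ fun p => LinearMap.toSpanSingleton ℂ (Cochain m)
    (Finsupp.single (J ++ p.1, p.2) (1 : ℂ))

/-- `ρ^J (φ^I_x) = (−1)^{|I||J|} φ^{IJ}_x`, extended linearly. -/
noncomputable def rho (r : ℕ) {m : ℕ} (J : List (Fin m)) : Cochain m →ₗ[ℂ] Cochain m :=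
  Finsupp.lsum ℂ fun p => LinearMap.toSpanSingleton ℂ (Cochain m)
    (((-1 : ℂ) ^ (lpar r p.1 * lpar r J)) • Finsupp.single (p.1 ++ J, p.2) (1 : ℂ))

/-- `θ = λ^{(a,b)} − λ^{(b,a)}`. -/
noncomputable def theta {m : ℕ} (a b : Fin m) : Cochain m →ₗ[ℂ] Cochain m :=
  lam [a, b] - lam [b, a]

/-- `τ`: swaps the outputs `a` and `b` of basis cochains (identity on other outputs). -/
noncomputable def tau {m : ℕ} (a b : Fin m) : Cochain m →ₗ[ℂ] Cochain m :=
  Finsupp.lsum ℂ fun p => LinearMap.toSpanSingleton ℂ (Cochain m)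
    (Finsupp.single (p.1, if p.2 = a then b else if p.2 = b then a else p.2) (1 : ℂ))

/-! ### Full cohomology -/

/-- Cocycles of degree `n` of the full complex. -/
noncomputable def Zfull (r : ℕ) {m : ℕ} (a b : Fin m) (n : ℕ) : Submodule ℂ (Cochain m) :=
  Cn m n ⊓ LinearMap.ker (Dop r a b)

/-- Coboundaries of degree `n` of the full complex (`C^{-1} = 0`). -/
noncomputable def Bfull (r : ℕ) {m : ℕ} (a b : Fin m) : ℕ → Submodule ℂ (Cochain m)
  | 0 => ⊥
  | n + 1 => Submodule.map (Dop r a b) (Cn m n)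

/-- The full cohomology `H^n = Z^n / B^n`. -/
noncomputable abbrev Hfull (r : ℕ) {m : ℕ} (a b : Fin m) (n : ℕ) : Type :=
  Zfull r a b n ⧸ (Bfull r a b n).comap (Zfull r a b n).subtype

/-! ### The restricted complexes -/

/-- The restricted differential `D_x`: the `e₁`-output component of `D` when `x = a`,
and `D` itself (which preserves output `x`) otherwise. -/
noncomputable def Dx (r : ℕ) {m : ℕ} (a b x : Fin m) : Cochain m →ₗ[ℂ] Cochain m :=
  if x = a then projOut a ∘ₗ Dop r a b else Dop r a b

/-- Cocycles of the restricted complex `(C^•_x, D_x)`. -/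
noncomputable def Zx (r : ℕ) {m : ℕ} (a b x : Fin m) (n : ℕ) : Submodule ℂ (Cochain m) :=
  Cnx m n x ⊓ LinearMap.ker (Dx r a b x)

/-- Coboundaries of the restricted complex `(C^•_x, D_x)` (`C^{-1}_x = 0`). -/
noncomputable def Bx (r : ℕ) {m : ℕ} (a b x : Fin m) : ℕ → Submodule ℂ (Cochain m)
  | 0 => ⊥
  | n + 1 => Submodule.map (Dx r a b x) (Cnx m n x)

/-- Cohomology `H^n_x` of the restricted complex `(C^•_x, D_x)`. -/
noncomputable abbrev Hx (r : ℕ) {m : ℕ} (a b x : Fin m) (n : ℕ) : Type :=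
  Zx r a b x n ⧸ (Bx r a b x n).comap (Zx r a b x n).subtype

/-! ### The subcomplex `C^•_a ⊕ C^•_b` and the `b`-output complex -/

/-- `C^n_a ⊕ C^n_b` (internal direct sum). -/
noncomputable def Cpair (m : ℕ) (a b : Fin m) (n : ℕ) : Submodule ℂ (Cochain m) :=
  Cnx m n a ⊔ Cnx m n b

noncomputable def Zpair (r : ℕ) {m : ℕ} (a b : Fin m) (n : ℕ) : Submodule ℂ (Cochain m) :=
  Cpair m a b n ⊓ LinearMap.ker (Dop r a b)

noncomputable def Bpair (r : ℕ) {m : ℕ} (a b : Fin m) : ℕ → Submodule ℂ (Cochain m)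
  | 0 => ⊥
  | n + 1 => Submodule.map (Dop r a b) (Cpair m a b n)

/-- `H^n`: the cohomology of the subcomplex `(C^•_a ⊕ C^•_b, D)`. -/
noncomputable abbrev Hpair (r : ℕ) {m : ℕ} (a b : Fin m) (n : ℕ) : Type :=
  Zpair r a b n ⧸ (Bpair r a b n).comap (Zpair r a b n).subtype

/-- Cocycles of `(C^•_b, D_b)`, where `D_b` is the restriction of `D`. -/
noncomputable def Zm (r : ℕ) {m : ℕ} (a b : Fin m) (n : ℕ) : Submodule ℂ (Cochain m) :=
  Cnx m n b ⊓ LinearMap.ker (Dop r a b)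

noncomputable def Bm (r : ℕ) {m : ℕ} (a b : Fin m) : ℕ → Submodule ℂ (Cochain m)
  | 0 => ⊥
  | n + 1 => Submodule.map (Dop r a b) (Cnx m n b)

/-- `H^n_b`: the cohomology of `(C^•_b, D_b)`. -/
noncomputable abbrev Hm (r : ℕ) {m : ℕ} (a b : Fin m) (n : ℕ) : Type :=
  Zm r a b n ⧸ (Bm r a b n).comap (Zm r a b n).subtype

lemma Zm_le_Zpair (r : ℕ) {m : ℕ} (a b : Fin m) (n : ℕ) :
    Zm r a b n ≤ Zpair r a b n :=
  inf_le_inf le_sup_right le_rfl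

lemma Bm_le_Bpair (r : ℕ) {m : ℕ} (a b : Fin m) : ∀ n : ℕ, Bm r a b n ≤ Bpair r a b n
  | 0 => bot_le
  | _ + 1 => Submodule.map_mono le_sup_right

/-- The natural map `H^n_b → H^n` induced by the inclusion of cocycles. -/
noncomputable def iotaHm (r : ℕ) {m : ℕ} (a b : Fin m) (n : ℕ) :
    Hm r a b n →ₗ[ℂ] Hpair r a b n :=
  Submodule.mapQ _ _ (Submodule.inclusion (Zm_le_Zpair r a b n))
    (fun z hz => Bm_le_Bpair r a b n hz)

/-- `Ĥ^n_f`: the image of `H^n_b` in `H^n`. -/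
noncomputable def Hfhat (r : ℕ) {m : ℕ} (a b : Fin m) (n : ℕ) : Submodule ℂ (Hpair r a b n) :=
  LinearMap.range (iotaHm r a b n)

/-- `Ĥ^n_e = H^n / Ĥ^n_f`. -/
noncomputable abbrev Hehat (r : ℕ) {m : ℕ} (a b : Fin m) (n : ℕ) : Type :=
  Hpair r a b n ⧸ Hfhat r a b n

/-! ### The spaces `Ĉ^n_x` of nontrivial cocycles -/

/-- The recursively defined subspaces `Ĉ^n_x` of nontrivial cocycles. -/
noncomputable def Chat (r : ℕ) {m : ℕ} (a b x : Fin m) : ℕ → Submodule ℂ (Cochain m)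
  | 0 => Submodule.span ℂ {Finsupp.single (([] : List (Fin m)), x) 1}
  | 1 => Submodule.span ℂ
      ({Finsupp.single ([a], x) 1} ∪
        ⋃ c ∈ {c : Fin m | c ≠ a ∧ c ≠ b}, lam [c] '' (Chat r a b x 0 : Set (Cochain m)))
  | n + 2 => Submodule.span ℂ
      ((⋃ c ∈ {c : Fin m | c ≠ a ∧ c ≠ b},
          lam [c] '' (Chat r a b x (n + 1) : Set (Cochain m))) ∪
        (theta a b '' (Chat r a b x n : Set (Cochain m))) ∪
        ⋃ c ∈ {c : Fin m | c ≠ a ∧ c ≠ b},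
          (lam [a] + rho r [a]) '' (lam [c] '' (Chat r a b x n : Set (Cochain m))))


section ops
variable {m : ℕ}

noncomputable def Pop (r : ℕ) (a b : Fin m) : Cochain m →ₗ[ℂ] Cochain m :=
  - (((comp r).flip (dd a b)) ∘ₗ twist r)

noncomputable def Top (a b : Fin m) : Cochain m →ₗ[ℂ] Cochain m := tau a b ∘ₗ projOut a

noncomputable def Lop (r : ℕ) (a : Fin m) : Cochain m →ₗ[ℂ] Cochain m := lam [a] + rho r [a]

noncomputable def bs (I : List (Fin m)) (x : Fin m) : Cochain m := Finsupp.single (I, x) (1 : ℂ)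

lemma cext {M : Type*} [AddCommMonoid M] [Module ℂ M] {f g : Cochain m →ₗ[ℂ] M}
    (h : ∀ I x, f (bs I x) = g (bs I x)) (u : Cochain m) : f u = g u := by
  have : f = g := by
    apply Finsupp.lhom_ext'
    rintro ⟨I, x⟩
    apply LinearMap.ext_ring
    exact h I x
  rw [this]

@[simp] lemma lam_bs (J I : List (Fin m)) (x : Fin m) : lam J (bs I x) = bs (J ++ I) x := by
  simp [lam, bs]

@[simp] lemma rho_bs (r : ℕ) (J I : List (Fin m)) (x : Fin m) : rho r J (bs I x) =
    ((-1 : ℂ) ^ (lpar r I * lpar r J)) • bs (I ++ J) x := by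
  simp [rho, bs]

@[simp] lemma twist_bs (r : ℕ) (I : List (Fin m)) (x : Fin m) : twist r (bs I x) =
    ((-1 : ℂ) ^ (lpar r I + par r x)) • bs I x := by
  simp [twist, bs, ppar]

@[simp] lemma Top_bs (a b : Fin m) (I : List (Fin m)) (x : Fin m) : Top a b (bs I x) =
    if x = a then bs I b else 0 := by
  simp only [Top, LinearMap.comp_apply, projOut, bs]
  split_ifs with h
  · simp [h, tau]
  · simp [h]

lemma lam_comp (J K : List (Fin m)) (u : Cochain m) : lam J (lam K u) = lam (J ++ K) u := by
  have := cext (f := lam J ∘ₗ lam K) (g := lam (J ++ K)) (fun I x => by simp) u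
  simpa using this

lemma comp_bs (r : ℕ) (p q : List (Fin m) × Fin m) :
    comp r (Finsupp.single p (1:ℂ)) (Finsupp.single q (1:ℂ)) = basisComp r p q := by
  simp [comp]

lemma Pop_bs (r : ℕ) (a b : Fin m) (I : List (Fin m)) (x : Fin m) : Pop r a b (bs I x) =
    - (((-1 : ℂ) ^ (lpar r I + par r x)) • basisComp r (I, x) ([a, a], b)) := by
  rw [Pop, LinearMap.neg_apply, LinearMap.comp_apply, twist_bs, map_smul, LinearMap.flip_apply]
  simp only [dd, bs, comp_bs]

@[simp] lemma lpar_nil (r : ℕ) : lpar r ([] : List (Fin m)) = 0 := rfl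
@[simp] lemma lpar_cons (r : ℕ) (i : Fin m) (I : List (Fin m)) :
    lpar r (i :: I) = par r i + lpar r I := by simp [lpar]
@[simp] lemma lpar_append (r : ℕ) (I J : List (Fin m)) :
    lpar r (I ++ J) = lpar r I + lpar r J := by simp [lpar]

lemma G_cons (r : ℕ) (a b : Fin m) (ha : par r a = 0) (hb : par r b = 1)
    (i : Fin m) (I : List (Fin m)) (x : Fin m) :
    basisComp r (i :: I, x) ([a, a], b) =
      (if i = b then - bs (a :: a :: I) x else 0) +
        ((-1 : ℂ) ^ (par r i)) • lam [i] (basisComp r (I, x) ([a, a], b)) := by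
  have hp : ppar r ([a, a], b) = 1 := by simp [ppar, ha, hb]
  unfold basisComp
  simp only [hp]
  rw [show (∑ k : Fin (i :: I, x).1.length, _ : Cochain m) = _ from
    Fin.sum_univ_succ (n := I.length) _]
  congr 1
  · simp [insertAt, bs]
    split_ifs with h
    · subst h; simp [hb]
    · rfl
  · rw [map_sum, Finset.smul_sum]
    refine Finset.sum_congr rfl fun k _ => ?_
    simp only [List.get_eq_getElem, Fin.val_succ, List.getElem_cons_succ]
    split_ifs with h
    · simp [insertAt, pow_add, mul_smul, lam]
    · simp

lemma Pop_nil (r : ℕ) (a b x : Fin m) : Pop r a b (bs [] x) = 0 := by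
  rw [Pop_bs]; simp [basisComp]

lemma Pop_lam (r : ℕ) (a b : Fin m) (ha : par r a = 0) (hb : par r b = 1)
    (i : Fin m) (u : Cochain m) :
    Pop r a b (lam [i] u) = lam [i] (Pop r a b u) +
      if i = b then - lam [a, a] (twist r u) else 0 := by
  have := cext (f := Pop r a b ∘ₗ lam [i]) (g := lam [i] ∘ₗ Pop r a b +
      if i = b then - (lam [a, a] ∘ₗ twist r) else 0) (fun I x => ?_) u
  · simp only [LinearMap.comp_apply, LinearMap.add_apply] at this
    rw [this]
    split_ifs <;> simp
  · simp only [LinearMap.comp_apply, LinearMap.add_apply, lam_bs, Pop_bs, List.cons_append, List.nil_append]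
    rw [G_cons r a b ha hb]
    have h2 : ((-1:ℂ)^(par r i)) * (-1)^(par r i) = 1 := by
      rw [← mul_pow]; simp
    split_ifs with h
    · subst h
      simp only [lpar_cons, hb, pow_add, pow_one, LinearMap.comp_apply, LinearMap.neg_apply, twist_bs, map_smul, lam_bs, map_neg,
        List.cons_append, List.nil_append]
      module
    · simp only [lpar_cons, LinearMap.zero_apply, zero_add, add_zero, map_neg, map_smul, smul_smul]
      congr 2
      rw [pow_add, pow_add, pow_add]
      linear_combination ((-1)^(lpar r I) * (-1)^(par r x)) * h2

lemma Pop_lam_ne (r : ℕ) (a b : Fin m) (ha : par r a = 0) (hb : par r b = 1)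
    (i : Fin m) (hi : i ≠ b) (u : Cochain m) :
    Pop r a b (lam [i] u) = lam [i] (Pop r a b u) := by
  rw [Pop_lam r a b ha hb, if_neg hi, add_zero]

lemma twist_lam (r : ℕ) (i : Fin m) (u : Cochain m) :
    twist r (lam [i] u) = ((-1 : ℂ) ^ (par r i)) • lam [i] (twist r u) := by
  have := cext (f := twist r ∘ₗ lam [i]) (g := ((-1 : ℂ) ^ (par r i)) • (lam [i] ∘ₗ twist r))
    (fun I x => by simp [pow_add, smul_smul, mul_assoc]) u
  simpa using this

lemma twist_twist (r : ℕ) (u : Cochain m) : twist r (twist r u) = u := by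
  have := cext (f := twist r ∘ₗ twist r) (g := LinearMap.id)
    (fun I x => by simp [smul_smul, ← mul_pow]) u
  simpa using this

lemma cext_cons {M : Type*} [AddCommMonoid M] [Module ℂ M] {f g : Cochain m →ₗ[ℂ] M}
    (h0 : ∀ x, f (bs [] x) = g (bs [] x))
    (h : ∀ i I x, f (bs I x) = g (bs I x) → f (lam [i] (bs I x)) = g (lam [i] (bs I x)))
    (u : Cochain m) : f u = g u := by
  refine cext (fun I x => ?_) u
  induction I with
  | nil => exact h0 x
  | cons i I ih => simpa using h i I x ih

lemma ne_ab {r : ℕ} {a b : Fin m} (ha : par r a = 0) (hb : par r b = 1) : a ≠ b := by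
  rintro rfl; omega

lemma twist_Pop (r : ℕ) (a b : Fin m) (ha : par r a = 0) (hb : par r b = 1) (u : Cochain m) :
    twist r (Pop r a b u) = - Pop r a b (twist r u) := by
  refine cext_cons (f := twist r ∘ₗ Pop r a b) (g := - (Pop r a b ∘ₗ twist r)) ?_ ?_ u
  · intro x; simp [Pop_nil]
  · intro i I x ih
    simp only [LinearMap.comp_apply, LinearMap.neg_apply] at ih ⊢
    rw [Pop_lam r a b ha hb, twist_lam, map_smul, Pop_lam r a b ha hb, map_add, twist_lam, ih]
    split_ifs with h
    · subst h
      rw [show lam [a, a] (twist r (bs I x)) = lam [a] (lam [a] (twist r (bs I x))) by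
        rw [lam_comp]; rfl, map_neg, map_neg, twist_lam, twist_lam, twist_twist, map_smul, lam_comp]
      simp only [ha, hb, map_neg, List.cons_append, List.nil_append]
      module
    · simp

lemma Pop_Pop (r : ℕ) (a b : Fin m) (ha : par r a = 0) (hb : par r b = 1) (u : Cochain m) :
    Pop r a b (Pop r a b u) = 0 := by
  refine cext_cons (f := Pop r a b ∘ₗ Pop r a b) (g := 0) ?_ ?_ u
  · intro x; simp [Pop_nil]
  · intro i I x ih
    simp only [LinearMap.comp_apply, LinearMap.zero_apply] at ih ⊢
    rw [Pop_lam r a b ha hb, map_add, Pop_lam r a b ha hb, ih]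
    split_ifs with h
    · rw [show lam [a, a] (twist r (bs I x)) = lam [a] (lam [a] (twist r (bs I x))) by
        rw [lam_comp]; rfl, map_neg, Pop_lam_ne r a b ha hb a (ne_ab ha hb),
        Pop_lam_ne r a b ha hb a (ne_ab ha hb), twist_Pop r a b ha hb, lam_comp]
      simp
    · simp

lemma Pop_Lop (r : ℕ) (a b : Fin m) (ha : par r a = 0) (hb : par r b = 1) (u : Cochain m) :
    Pop r a b (Lop r a u) = Lop r a (Pop r a b u) := by
  have hrl : ∀ J (v : Cochain m), rho r [a] (lam J v) = lam J (rho r [a] v) := fun J v =>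
    cext (f := rho r [a] ∘ₗ lam J) (g := lam J ∘ₗ rho r [a]) (fun I x => by simp [ha]) v
  have hrt : ∀ (v : Cochain m), rho r [a] (twist r v) = twist r (rho r [a] v) := fun v =>
    cext (f := rho r [a] ∘ₗ twist r) (g := twist r ∘ₗ rho r [a]) (fun I x => by simp [ha]) v
  have : Pop r a b (rho r [a] u) = rho r [a] (Pop r a b u) := by
    refine cext_cons (f := Pop r a b ∘ₗ rho r [a]) (g := rho r [a] ∘ₗ Pop r a b) ?_ ?_ u
    · intro x
      have := Pop_lam_ne r a b ha hb a (ne_ab ha hb) (bs [] x)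
      simp [Pop_nil, ha] at this ⊢
      exact this
    · intro i I x ih
      simp only [LinearMap.comp_apply] at ih ⊢
      rw [hrl, Pop_lam r a b ha hb, Pop_lam r a b ha hb, ih, map_add, hrl]
      split_ifs
      · rw [map_neg, hrl, hrt]
      · simp
  simp only [Lop, LinearMap.add_apply, map_add]
  rw [this, Pop_lam_ne r a b ha hb a (ne_ab ha hb)]

lemma Top_lam (a b : Fin m) (J : List (Fin m)) (u : Cochain m) :
    Top a b (lam J u) = lam J (Top a b u) :=
  cext (f := Top a b ∘ₗ lam J) (g := lam J ∘ₗ Top a b) (fun I x => by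
    simp only [LinearMap.comp_apply, lam_bs, Top_bs]; split_ifs <;> simp) u

lemma Top_twist (r : ℕ) (a b : Fin m) (h : par r a + par r b = 1) (u : Cochain m) :
    Top a b (twist r u) = - twist r (Top a b u) :=
  cext (f := Top a b ∘ₗ twist r) (g := - (twist r ∘ₗ Top a b)) (fun I x => by
    simp only [LinearMap.comp_apply, twist_bs, Top_bs, map_smul, LinearMap.neg_apply]
    split_ifs with hx
    · subst hx
      have : (par r x = 0 ∧ par r b = 1) ∨ (par r x = 1 ∧ par r b = 0) := by omega
      rcases this with ⟨h1, h2⟩ | ⟨h1, h2⟩ <;> simp [h1, h2, pow_add]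
    · simp) u

lemma Top_Pop (r : ℕ) (a b c d : Fin m) (ha : par r a = 0) (hb : par r b = 1)
    (h : par r c + par r d = 1) (u : Cochain m) :
    Top c d (Pop r a b u) = - Pop r a b (Top c d u) := by
  refine cext_cons (f := Top c d ∘ₗ Pop r a b) (g := - (Pop r a b ∘ₗ Top c d)) ?_ ?_ u
  · intro x
    simp only [LinearMap.comp_apply, LinearMap.neg_apply, Pop_nil, Top_bs]
    split_ifs <;> simp [Pop_nil]
  · intro i I x ih
    simp only [LinearMap.comp_apply, LinearMap.neg_apply] at ih ⊢
    rw [Pop_lam r a b ha hb, Top_lam, Pop_lam r a b ha hb, map_add, Top_lam, ih]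
    split_ifs
    · rw [map_neg, map_neg, Top_lam, Top_twist r c d h]; simp; abel
    · simp

lemma Dop_eq (r : ℕ) (a b : Fin m) (ha : par r a = 0) (u : Cochain m) :
    Dop r a b u = Pop r a b u + Lop r a (Top a b u) := by
  have : comp r (dd a b) u = Lop r a (Top a b u) :=
    cext (f := comp r (dd a b)) (g := Lop r a ∘ₗ Top a b) (fun I x => by
      rw [bs, dd, comp_bs]; change _ = (Lop r a ∘ₗ Top a b) (bs I x)
      simp only [LinearMap.comp_apply, Top_bs, Lop]
      unfold basisComp
      rw [show (∑ k : Fin ([a, a], b).1.length, _ : Cochain m) = _ from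
        Fin.sum_univ_two _]
      by_cases h : x = a
      · subst h
        simp [insertAt, ha, bs, add_comm]
        simp [lam, rho, ha, add_comm]
      · simp [h, Ne.symm h]) u
  simp only [Dop, Pop, LinearMap.sub_apply, LinearMap.neg_apply, this]
  abel

lemma bs_mem {n : ℕ} {I : List (Fin m)} (h : I.length = n) (x : Fin m) : bs I x ∈ Cnx m n x :=
  Submodule.subset_span ⟨I, h, rfl⟩

lemma Cnx_map {n k : ℕ} {x y : Fin m} (f : Cochain m →ₗ[ℂ] Cochain m)
    (h : ∀ I : List (Fin m), I.length = n → f (bs I x) ∈ Cnx m k y) {u : Cochain m} (hu : u ∈ Cnx m n x) :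
    f u ∈ Cnx m k y := by
  have : Cnx m n x ≤ (Cnx m k y).comap f := by
    rw [Cnx, Submodule.span_le]
    rintro _ ⟨I, hI, rfl⟩
    exact h I hI
  exact this hu

lemma Cnx_eq {n : ℕ} {x : Fin m} (f g : Cochain m →ₗ[ℂ] Cochain m)
    (h : ∀ I : List (Fin m), f (bs I x) = g (bs I x)) {u : Cochain m} (hu : u ∈ Cnx m n x) :
    f u = g u := by
  have : Cnx m n x ≤ LinearMap.eqLocus f g := by
    rw [Cnx, Submodule.span_le]
    rintro _ ⟨I, hI, rfl⟩
    exact h I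
  exact this hu

lemma lam_mem {n : ℕ} {x : Fin m} (i : Fin m) {u : Cochain m} (hu : u ∈ Cnx m n x) :
    lam [i] u ∈ Cnx m (n+1) x :=
  Cnx_map _ (fun I hI => by rw [lam_bs]; exact bs_mem (by simp [hI]) x) hu

lemma twist_mem (r : ℕ) {n : ℕ} {x : Fin m} {u : Cochain m} (hu : u ∈ Cnx m n x) :
    twist r u ∈ Cnx m n x :=
  Cnx_map _ (fun I hI => by rw [twist_bs]; exact Submodule.smul_mem _ _ (bs_mem hI x)) hu

lemma Lop_mem (r : ℕ) {n : ℕ} {x : Fin m} (i : Fin m) {u : Cochain m} (hu : u ∈ Cnx m n x) :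
    Lop r i u ∈ Cnx m (n+1) x :=
  Cnx_map _ (fun I hI => by
    simp only [Lop, LinearMap.add_apply, lam_bs, rho_bs]
    exact Submodule.add_mem _ (bs_mem (by simp [hI]) x)
      (Submodule.smul_mem _ _ (bs_mem (by simp [hI]) x))) hu

lemma Pop_mem (r : ℕ) (a b : Fin m) (ha : par r a = 0) (hb : par r b = 1)
    {n : ℕ} {x : Fin m} {u : Cochain m} (hu : u ∈ Cnx m n x) :
    Pop r a b u ∈ Cnx m (n+1) x := by
  refine Cnx_map _ ?_ hu
  intro I hI
  induction I generalizing n u with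
  | nil => rw [Pop_nil]; exact Submodule.zero_mem _
  | cons i I ih =>
    have h1 := ih (n := I.length) (Submodule.zero_mem _) rfl
    have := Pop_lam r a b ha hb i (bs I x)
    rw [lam_bs] at this
    simp only [List.cons_append, List.nil_append] at this
    rw [this]
    subst hI
    refine Submodule.add_mem _ (lam_mem _ h1) ?_
    split_ifs
    · rw [twist_bs, map_smul, lam_bs]
      exact Submodule.neg_mem _ <| Submodule.smul_mem _ _ (bs_mem (by simp) x)
    · exact Submodule.zero_mem _

lemma Top_mem {n : ℕ} (a b : Fin m) {x : Fin m} {u : Cochain m} (hu : u ∈ Cnx m n x) :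
    Top a b u ∈ Cnx m n b :=
  Cnx_map _ (fun I hI => by
    rw [Top_bs]; split_ifs
    · exact bs_mem hI b
    · exact Submodule.zero_mem _) hu

lemma Top_zero {n : ℕ} (a b : Fin m) {x : Fin m} (hx : x ≠ a) {u : Cochain m} (hu : u ∈ Cnx m n x) :
    Top a b u = 0 :=
  Cnx_eq (Top a b) 0 (fun I => by simp [hx]) hu

lemma Top_Top {n : ℕ} (a b : Fin m) {u : Cochain m} (hu : u ∈ Cnx m n a) :
    Top b a (Top a b u) = u :=
  Cnx_eq (Top b a ∘ₗ Top a b) LinearMap.id (fun I => by simp) hu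

end ops

section dims
variable {m : ℕ}

noncomputable def strip (i : Fin m) : Cochain m →ₗ[ℂ] Cochain m :=
  Finsupp.lcomapDomain (fun p : List (Fin m) × Fin m => (i :: p.1, p.2))
    (by rintro ⟨I, x⟩ ⟨J, y⟩ h; simpa using h)

lemma strip_lam (i j : Fin m) (u : Cochain m) :
    strip i (lam [j] u) = if i = j then u else 0 := by
  have := cext (f := strip i ∘ₗ lam [j]) (g := if i = j then LinearMap.id else 0) (fun I x => ?_) u
  · rw [LinearMap.comp_apply] at this
    rw [this]; split_ifs <;> rfl
  · rw [LinearMap.comp_apply, lam_bs]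
    ext ⟨J, y⟩
    simp only [strip, bs, Finsupp.lcomapDomain, LinearMap.coe_mk, AddHom.coe_mk,
      Finsupp.comapDomain_apply, Finsupp.single_apply]
    split_ifs with h1 h2 h2 <;> simp_all [bs, Finsupp.single_apply]

lemma strip_mem {n : ℕ} {x : Fin m} (i : Fin m) {u : Cochain m} (hu : u ∈ Cnx m (n+1) x) :
    strip i u ∈ Cnx m n x :=
  Cnx_map _ (fun I hI => by
    cases I with
    | nil => simp at hI
    | cons j I =>
      have := strip_lam i j (bs I x)
      rw [lam_bs] at this
      simp only [List.cons_append, List.nil_append] at this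
      rw [this]
      split_ifs
      · exact bs_mem (by simpa using hI) x
      · exact Submodule.zero_mem _) hu

lemma sum_strip {n : ℕ} {x : Fin m} {u : Cochain m} (hu : u ∈ Cnx m (n+1) x) :
    u = ∑ i, lam [i] (strip i u) := by
  have : Cnx m (n+1) x ≤ LinearMap.eqLocus LinearMap.id (∑ i, lam [i] ∘ₗ strip i) := by
    rw [Cnx, Submodule.span_le]
    rintro _ ⟨I, hI, rfl⟩
    cases I with
    | nil => simp at hI
    | cons j I =>
      change bs (j :: I) x = (∑ i, lam [i] ∘ₗ strip i) (bs (j :: I) x)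
      have h := lam_bs [j] I x
      simp only [List.cons_append, List.nil_append] at h
      rw [← h, LinearMap.sum_apply]
      simp only [LinearMap.comp_apply, strip_lam]
      rw [Finset.sum_eq_single j] <;> simp +contextual
  have h := this hu
  simpa using h

lemma lam_inj (i : Fin m) : Function.Injective (lam [i] : Cochain m →ₗ[ℂ] Cochain m) := by
  intro u v h
  have := congrArg (strip i) h
  simpa [strip_lam] using this

instance Cnx_fin (n : ℕ) (x : Fin m) : Module.Finite ℂ (Cnx m n x) := by
  apply FiniteDimensional.span_of_finite
  have : {f : Cochain m | ∃ I : List (Fin m), I.length = n ∧ f = Finsupp.single (I, x) 1} =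
      (fun I => bs I x) '' {I : List (Fin m) | I.length = n} := by
    ext f; simp [bs, eq_comm]
  rw [this]
  exact (List.finite_length_eq (Fin m) n).image _

noncomputable def Psi (p : Fin m → Prop) [DecidablePred p] (W : Submodule ℂ (Cochain m)) :
    ({i // p i} → W) →ₗ[ℂ] Cochain m :=
  ∑ i, lam [i.1] ∘ₗ W.subtype ∘ₗ LinearMap.proj i

lemma Psi_apply (p : Fin m → Prop) [DecidablePred p] (W : Submodule ℂ (Cochain m)) (f) :
    Psi p W f = ∑ i : {i // p i}, lam [i.1] (f i : Cochain m) := by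
  simp [Psi]

lemma strip_Psi (p : Fin m → Prop) [DecidablePred p] (W : Submodule ℂ (Cochain m)) (f)
    (j : Fin m) : strip j (Psi p W f) = if h : p j then (f ⟨j, h⟩ : Cochain m) else 0 := by
  rw [Psi_apply, map_sum]
  simp only [strip_lam]
  split_ifs with h
  · rw [Finset.sum_eq_single ⟨j, h⟩]
    · simp
    · rintro ⟨i, hi⟩ _ hne
      rw [if_neg]; rintro rfl; exact hne rfl
    · simp
  · apply Finset.sum_eq_zero
    rintro ⟨i, hi⟩ _
    rw [if_neg]; rintro rfl; exact h hi

lemma Psi_finrank (p : Fin m → Prop) [DecidablePred p] (W : Submodule ℂ (Cochain m))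
    [Module.Finite ℂ W] :
    Module.finrank ℂ (LinearMap.range (Psi p W)) = Fintype.card {i // p i} * Module.finrank ℂ W := by
  rw [LinearMap.finrank_range_of_inj]
  · rw [Module.finrank_pi_fintype]; simp
  · intro f g h
    ext1 i
    have := congrArg (strip i.1) h
    rw [strip_Psi, strip_Psi, dif_pos i.2, dif_pos i.2] at this
    exact Subtype.ext this

lemma mem_Psi {n : ℕ} {x : Fin m} (p : Fin m → Prop) [DecidablePred p] (W : Submodule ℂ (Cochain m))
    {u : Cochain m} (hu : u ∈ Cnx m (n+1) x) (h1 : ∀ i, p i → strip i u ∈ W)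
    (h0 : ∀ i, ¬ p i → strip i u = 0) : u ∈ LinearMap.range (Psi p W) := by
  refine ⟨fun i => ⟨strip i.1 u, h1 i.1 i.2⟩, ?_⟩
  rw [Psi_apply]
  conv_rhs => rw [sum_strip hu]
  refine (Finset.sum_subtype (p := p) (Finset.univ.filter p) (by simp)
    (fun i => lam [i] (strip i u))).symm.trans ?_
  rw [Finset.sum_filter_of_ne]
  intro i _ h
  by_contra hp
  exact h (by rw [h0 i hp, map_zero])

lemma Cnx_finrank (n : ℕ) (x : Fin m) : Module.finrank ℂ (Cnx m n x) = m ^ n := by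
  induction n with
  | zero =>
    have : Cnx m 0 x = Submodule.span ℂ {bs [] x} := by
      unfold Cnx
      congr 1
      ext f; simp [bs]
    rw [this, finrank_span_singleton]
    · simp
    · simp [bs]
  | succ n ih =>
    have : Cnx m (n+1) x = LinearMap.range (Psi (fun _ => True) (Cnx m n x)) := by
      apply le_antisymm
      · intro u hu
        exact mem_Psi _ _ hu (fun i _ => strip_mem i hu) (by simp)
      · rintro _ ⟨f, rfl⟩
        rw [Psi_apply]
        exact Submodule.sum_mem _ fun i _ => lam_mem _ (f i).2
    rw [this, Psi_finrank, ih, pow_succ]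
    simp [mul_comm]

/-- cocycles -/
noncomputable def ZZ (r : ℕ) (a b : Fin m) (n : ℕ) : Submodule ℂ (Cochain m) :=
  Cnx m n b ⊓ LinearMap.ker (Pop r a b)

noncomputable def BB (r : ℕ) (a b : Fin m) : ℕ → Submodule ℂ (Cochain m)
  | 0 => ⊥
  | n + 1 => Submodule.map (Pop r a b) (Cnx m n b)

noncomputable def XX (r : ℕ) (a b : Fin m) (n : ℕ) : Submodule ℂ (Cochain m) :=
  ZZ r a b n ⊓ (BB r a b (n+1)).comap (lam [a])

variable (r : ℕ) (a b : Fin m)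

instance ZZ_fin (n : ℕ) : Module.Finite ℂ (ZZ r a b n) :=
  Submodule.finiteDimensional_of_le (S₂ := Cnx m n b) inf_le_left

instance XX_fin (n : ℕ) : Module.Finite ℂ (XX r a b n) :=
  Submodule.finiteDimensional_of_le (S₂ := ZZ r a b n) inf_le_left

instance BB_fin (n : ℕ) : Module.Finite ℂ (BB r a b n) := by
  cases n with
  | zero => unfold BB; infer_instance
  | succ n => unfold BB; infer_instance

variable (ha : par r a = 0) (hb : par r b = 1)

lemma mem_ZZ {n : ℕ} {u : Cochain m} : u ∈ ZZ r a b n ↔ u ∈ Cnx m n b ∧ Pop r a b u = 0 := by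
  simp [ZZ]

lemma finrank_BB (n : ℕ) :
    Module.finrank ℂ (BB r a b (n+1)) + Module.finrank ℂ (ZZ r a b n) = m ^ n := by
  have := LinearMap.finrank_range_add_finrank_ker ((Pop r a b).domRestrict (Cnx m n b))
  rw [Cnx_finrank] at this
  rw [← this]
  congr 1
  · rw [BB, LinearMap.range_domRestrict]
  · rw [LinearMap.ker_domRestrict]
    have h : (LinearMap.ker (Pop r a b)).comap (Cnx m n b).subtype =
      (ZZ r a b n).comap (Cnx m n b).subtype := by
      ext u; simp [ZZ]
    rw [h]
    exact (LinearEquiv.finrank_eq (Submodule.comapSubtypeEquivOfLe inf_le_left)).symm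

include ha hb

/-- the components of a coboundary -/
lemma strip_Pop {n : ℕ} {x : Fin m} {u : Cochain m} (hu : u ∈ Cnx m (n+1) x) (i : Fin m) :
    strip i (Pop r a b u) = Pop r a b (strip i u) -
      if i = a then lam [a] (twist r (strip b u)) else 0 := by
  conv_lhs => rw [sum_strip hu]
  rw [map_sum, map_sum]
  have : ∀ j, strip i (Pop r a b (lam [j] (strip j u))) =
      (if i = j then Pop r a b (strip j u) else 0) +
       (if j = b then (if i = a then - lam [a] (twist r (strip b u)) else 0) else 0) := by
    intro j
    rw [Pop_lam r a b ha hb, map_add, strip_lam]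
    congr 1
    split_ifs with h1 h2
    · subst h1 
      rw [map_neg, show lam [a, a] (twist r (strip j u)) = lam [a] (lam [a] (twist r (strip j u))) by
        rw [lam_comp]; rfl, strip_lam, if_pos h2]
    · subst h1 
      rw [map_neg, show lam [a, a] (twist r (strip j u)) = lam [a] (lam [a] (twist r (strip j u))) by
        rw [lam_comp]; rfl, strip_lam, if_neg h2, neg_zero]
    · simp
  simp only [this, Finset.sum_add_distrib, Finset.sum_ite_eq, Finset.sum_ite_eq', Finset.mem_univ, if_true]
  split_ifs <;> simp [sub_eq_add_neg]

lemma twist_BB {n : ℕ} {u : Cochain m} (hu : u ∈ BB r a b (n+1)) : twist r u ∈ BB r a b (n+1) := by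
  obtain ⟨v, hv, rfl⟩ := hu
  refine ⟨-twist r v, Submodule.neg_mem _ (twist_mem r hv), ?_⟩
  rw [map_neg, twist_Pop r a b ha hb]

lemma twist_XX {n : ℕ} {u : Cochain m} (hu : u ∈ XX r a b n) : twist r u ∈ XX r a b n := by
  obtain ⟨h1, h2⟩ := hu
  have h1 := (mem_ZZ ..).1 h1
  refine ⟨(mem_ZZ ..).2 ⟨twist_mem r h1.1, ?_⟩, ?_⟩
  · have := twist_Pop r a b ha hb u
    rw [h1.2, map_zero] at this
    exact neg_eq_zero.1 this.symm
  · have := twist_BB r a b ha hb h2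
    rw [twist_lam, ha] at this
    simpa using this

lemma BB_le_ZZ (n : ℕ) : BB r a b n ≤ ZZ r a b n := by
  cases n with
  | zero => exact bot_le
  | succ n =>
    rintro _ ⟨v, hv, rfl⟩
    exact (mem_ZZ ..).2 ⟨Pop_mem r a b ha hb hv, Pop_Pop r a b ha hb v⟩

lemma finrank_ZZ (n : ℕ) : Module.finrank ℂ (ZZ r a b (n+1)) =
    (m - 1) * Module.finrank ℂ (ZZ r a b n) + Module.finrank ℂ (XX r a b n) := by
  have hab := ne_ab ha hb
  have := LinearMap.finrank_range_add_finrank_ker ((strip b).domRestrict (ZZ r a b (n+1)))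
  rw [← this, add_comm]
  congr 1
  · rw [LinearMap.ker_domRestrict]
    have h : (LinearMap.ker (strip b)).comap (ZZ r a b (n+1)).subtype =
      (LinearMap.range (Psi (· ≠ b) (ZZ r a b n))).comap (ZZ r a b (n+1)).subtype := by
      ext ⟨u, hu⟩
      simp only [Submodule.mem_comap, Submodule.subtype_apply, LinearMap.mem_ker]
      constructor
      · intro h
        rw [mem_ZZ] at hu
        refine mem_Psi _ _ hu.1 (fun i hi => ?_) (fun i hi => ?_)
        · refine (mem_ZZ ..).2 ⟨strip_mem i hu.1, ?_⟩
          have := strip_Pop r a b ha hb hu.1 i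
          rw [hu.2, h] at this
          simpa using this.symm
        · rw [not_not.1 hi, h]
      · rintro ⟨f, rfl⟩
        rw [strip_Psi, dif_neg (by simp)]
    rw [h, (LinearEquiv.finrank_eq (Submodule.comapSubtypeEquivOfLe ?_)), Psi_finrank]
    · simp [Fintype.card_subtype_compl]
    · rintro _ ⟨f, rfl⟩
      rw [Psi_apply]
      refine Submodule.sum_mem _ fun i _ => ?_
      have := (mem_ZZ ..).1 (f i).2
      refine (mem_ZZ ..).2 ⟨lam_mem _ this.1, ?_⟩
      rw [Pop_lam_ne r a b ha hb _ i.2, this.2, map_zero]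
  · rw [LinearMap.range_domRestrict]
    have key : (ZZ r a b (n+1)).map (strip b) = XX r a b n := ?_
    · rw [key]
    apply le_antisymm
    · rintro _ ⟨u, hu, rfl⟩
      have hu := (mem_ZZ ..).1 hu
      rw [← twist_twist r (strip b u)]
      apply twist_XX r a b ha hb
      have h1 := strip_Pop r a b ha hb hu.1 b
      have h2 := strip_Pop r a b ha hb hu.1 a
      rw [hu.2, map_zero] at h1 h2
      rw [if_neg hab.symm, sub_zero] at h1
      rw [if_pos rfl] at h2
      refine ⟨(mem_ZZ ..).2 ⟨twist_mem r (strip_mem b hu.1), ?_⟩, ?_⟩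
      · have := twist_Pop r a b ha hb (strip b u)
        rw [← h1, map_zero] at this
        exact neg_eq_zero.1 this.symm
      · exact ⟨strip a u, strip_mem a hu.1, sub_eq_zero.1 h2.symm⟩
    · intro u hu
      have hu' := twist_XX r a b ha hb hu
      have hz := (mem_ZZ ..).1 hu.1
      obtain ⟨v, hv, hvu⟩ := hu'.2
      refine ⟨lam [a] v + lam [b] u, (mem_ZZ ..).2
        ⟨Submodule.add_mem _ (lam_mem _ hv) (lam_mem _ hz.1), ?_⟩, ?_⟩
      · rw [map_add, Pop_lam_ne r a b ha hb _ hab, Pop_lam r a b ha hb, hz.2, hvu, lam_comp]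
        simp
      · rw [map_add, strip_lam, strip_lam, if_neg hab.symm, if_pos rfl, zero_add]

lemma XX_zero : XX r a b 0 = ⊥ := by
  rw [eq_bot_iff]
  rintro u ⟨h1, v, hv, h⟩
  have : Pop r a b v = (0 : Cochain m →ₗ[ℂ] Cochain m) v := by
    have hle : Cnx m 0 b ≤ LinearMap.eqLocus (Pop r a b) 0 := by
      rw [Cnx, Submodule.span_le]
      rintro _ ⟨I, hI, rfl⟩
      rw [List.length_eq_zero_iff] at hI
      subst hI
      exact Pop_nil r a b b
    exact hle hv
  rw [this] at h
  exact (Submodule.mem_bot ℂ).2 (lam_inj a (by rw [← h]; simp))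

lemma XX_succ (n : ℕ) : XX r a b (n+1) = BB r a b (n+1) ⊔ (ZZ r a b n).map (lam [a]) := by
  have hab := ne_ab ha hb
  apply le_antisymm
  · rintro u ⟨h1, v, hv, h⟩
    have h2 := strip_Pop r a b ha hb hv a
    have h3 := strip_Pop r a b ha hb hv b
    rw [h, strip_lam, if_pos rfl, if_pos rfl] at h2
    rw [h, strip_lam, if_neg hab.symm, if_neg hab.symm, sub_zero] at h3
    rw [h2, sub_eq_add_neg, ← map_neg]
    refine Submodule.add_mem_sup ⟨_, strip_mem a hv, rfl⟩ ⟨_, ?_, rfl⟩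
    refine Submodule.neg_mem _ ((mem_ZZ ..).2 ⟨twist_mem r (strip_mem b hv), ?_⟩)
    have := twist_Pop r a b ha hb (strip b v)
    rw [← h3, map_zero] at this
    exact neg_eq_zero.1 this.symm
  · rw [sup_le_iff]
    constructor
    · intro u hu
      refine ⟨BB_le_ZZ r a b ha hb _ hu, ?_⟩
      obtain ⟨v, hv, rfl⟩ := hu
      exact ⟨lam [a] v, lam_mem _ hv, Pop_lam_ne r a b ha hb _ hab _⟩
    · rintro _ ⟨v, hv, rfl⟩
      have hv := (mem_ZZ ..).1 hv
      refine ⟨(mem_ZZ ..).2 ⟨lam_mem _ hv.1, ?_⟩, ?_⟩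
      · rw [Pop_lam_ne r a b ha hb _ hab, hv.2, map_zero]
      · refine ⟨- lam [b] (twist r v), Submodule.neg_mem _ (lam_mem _ (twist_mem r hv.1)), ?_⟩
        have := twist_Pop r a b ha hb v
        rw [hv.2, map_zero] at this
        rw [map_neg, Pop_lam r a b ha hb, neg_eq_zero.1 this.symm, twist_twist, lam_comp]
        simp

lemma finrank_XX (n : ℕ) :
    Module.finrank ℂ (XX r a b (n+1)) + Module.finrank ℂ (XX r a b n) = m ^ n := by
  have h := Submodule.finrank_sup_add_finrank_inf_eq (BB r a b (n+1)) ((ZZ r a b n).map (lam [a]))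
  rw [← XX_succ r a b ha hb] at h
  have h2 : BB r a b (n+1) ⊓ (ZZ r a b n).map (lam [a]) = (XX r a b n).map (lam [a]) := by
    ext u
    constructor
    · rintro ⟨h1, v, hv, rfl⟩
      exact ⟨v, ⟨hv, h1⟩, rfl⟩
    · rintro ⟨v, ⟨hv, h1⟩, rfl⟩
      exact ⟨h1, v, hv, rfl⟩
  rw [h2, ← (Submodule.equivMapOfInjective _ (lam_inj a) _).finrank_eq,
    ← (Submodule.equivMapOfInjective _ (lam_inj a) _).finrank_eq] at h
  rw [h, finrank_BB]

lemma finrank_HH (hm : 1 ≤ m) (n : ℕ) :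
    Module.finrank ℂ (ZZ r a b n) = (m - 1) ^ n + Module.finrank ℂ (BB r a b n) := by
  obtain ⟨k, rfl⟩ : ∃ k, m = k + 1 := ⟨m - 1, by omega⟩
  simp only [Nat.add_sub_cancel]
  have hB := finrank_BB r a b
  have hZ := finrank_ZZ r a b ha hb
  have hX := finrank_XX r a b ha hb
  simp only [Nat.add_sub_cancel] at hZ
  have hZ0 : Module.finrank ℂ (ZZ r a b 0) = 1 := by
    have : ZZ r a b 0 = Cnx (k+1) 0 b := by
      apply le_antisymm inf_le_left
      intro u hu
      refine (mem_ZZ ..).2 ⟨hu, ?_⟩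
      have hle : Cnx (k+1) 0 b ≤ LinearMap.eqLocus (Pop r a b) 0 := by
        rw [Cnx, Submodule.span_le]
        rintro _ ⟨I, hI, rfl⟩
        rw [List.length_eq_zero_iff] at hI
        subst hI
        exact Pop_nil r a b b
      exact hle hu
    rw [this, Cnx_finrank, pow_zero]
  have hX0 : Module.finrank ℂ (XX r a b 0) = 0 := by
    rw [XX_zero r a b ha hb]; simp
  induction n with
  | zero => rw [hZ0, BB, finrank_bot, pow_zero]
  | succ n ih =>
    cases n with
    | zero =>
      have h1 := hB 0
      have h2 := hZ 0
      rw [h2, hX0, hZ0] at *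
      simp at *
      omega
    | succ n =>
      have h1 := hB n
      have h2 := hB (n+1)
      have h3 := hZ n
      have h4 := hZ (n+1)
      have h5 := hX n
      have e1 : (k+1)^(n+1) = k * (k+1)^n + (k+1)^n := by ring
      have e2 : k^(n+1+1) = k * k^(n+1) := by ring
      zify at *
      linear_combination h4 + h3 + h5 - h2 - e1 + k * h1 + k * ih - e2

end dims

section seq
variable {m : ℕ} (r : ℕ) (a b : Fin m) (ha : par r a = 0) (hb : par r b = 1)
include ha hb

lemma Dop_b {n : ℕ} {u : Cochain m} (hu : u ∈ Cnx m n b) : Dop r a b u = Pop r a b u := by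
  rw [Dop_eq r a b ha, Top_zero a b (ne_ab ha hb).symm hu, map_zero, add_zero]

lemma Zm_eq (n : ℕ) : Zm r a b n = ZZ r a b n := by
  ext u
  rw [mem_ZZ]
  simp only [Zm, Submodule.mem_inf, LinearMap.mem_ker]
  refine and_congr_right fun h => ?_
  rw [Dop_b r a b ha hb h]

lemma Bm_eq (n : ℕ) : Bm r a b n = BB r a b n := by
  cases n with
  | zero => rfl
  | succ n =>
    ext u
    constructor <;> rintro ⟨v, hv, rfl⟩ <;> refine ⟨v, hv, ?_⟩ <;> rw [Dop_b r a b ha hb hv]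

lemma finrank_Hm (hm : 1 ≤ m) (n : ℕ) : Module.Finite ℂ (Hm r a b n) ∧
    Module.finrank ℂ (Hm r a b n) = (m - 1) ^ n := by
  unfold Hm
  rw [Zm_eq r a b ha hb, Bm_eq r a b ha hb]
  refine ⟨inferInstance, ?_⟩
  have h := Submodule.finrank_quotient_add_finrank ((BB r a b n).comap (ZZ r a b n).subtype)
  rw [(Submodule.comapSubtypeEquivOfLe (BB_le_ZZ r a b ha hb n)).finrank_eq,
    finrank_HH r a b ha hb hm] at h
  omega

lemma mem_Zm {n : ℕ} {u : Cochain m} : u ∈ Zm r a b n ↔ u ∈ Cnx m n b ∧ Pop r a b u = 0 := by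
  rw [Zm_eq r a b ha hb, mem_ZZ]

/-- D applied to a sum -/
lemma Dop_pair {n : ℕ} {φ η : Cochain m} (hη : η ∈ Cnx m n b) :
    Dop r a b (φ + η) = Pop r a b φ + (Lop r a (Top a b φ) + Pop r a b η) := by
  rw [map_add, Dop_b r a b ha hb hη, Dop_eq r a b ha]; abel

lemma Top_pair {n : ℕ} {φ η : Cochain m} (hη : η ∈ Cnx m n b) :
    Top a b (φ + η) = Top a b φ := by
  rw [map_add, Top_zero a b (ne_ab ha hb).symm hη, add_zero]

/-- if `D (φ + η)` has only output `b` -/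
lemma pair_split {n : ℕ} {φ η w : Cochain m} (hφ : φ ∈ Cnx m n a) (hη : η ∈ Cnx m n b)
    (hw : w ∈ Cnx m (n+1) b) (h : Dop r a b (φ + η) = w) :
    Pop r a b (Top a b φ) = 0 ∧ Lop r a (Top a b φ) + Pop r a b η = w := by
  rw [Dop_pair r a b ha hb hη] at h
  have h1 := congrArg (Top a b) h
  have hb' : Lop r a (Top a b φ) + Pop r a b η ∈ Cnx m (n+1) b :=
    Submodule.add_mem _ (Lop_mem r a (Top_mem a b hφ)) (Pop_mem r a b ha hb hη)
  rw [Top_pair r a b ha hb hb', Top_zero a b (ne_ab ha hb).symm hw,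
    Top_Pop r a b a b ha hb (by omega), neg_eq_zero] at h1
  refine ⟨h1, ?_⟩
  have h2 : Pop r a b φ = 0 := by
    rw [← Top_Top a b hφ, ← neg_eq_zero, ← Top_Pop r a b b a ha hb (by omega), h1, map_zero]
  rwa [h2, zero_add] at h

lemma Pop_s {n : ℕ} {u : Cochain m} (hu : u ∈ Cnx m n b) {v : Cochain m} (h : Pop r a b u = v) :
    Dop r a b (Top b a u) = - Top b a v + Lop r a u := by
  rw [Dop_eq r a b ha, Top_Top b a hu, ← h, Top_Pop r a b b a ha hb (by omega), neg_neg]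

lemma Top_Zpair {n : ℕ} {z : Cochain m} (hz : z ∈ Zpair r a b n) : Top a b z ∈ Zm r a b n := by
  obtain ⟨h1, h2⟩ := hz
  obtain ⟨φ, hφ, η, hη, rfl⟩ := Submodule.mem_sup.1 h1
  rw [Top_pair r a b ha hb hη]
  exact (mem_Zm r a b ha hb).2 ⟨Top_mem a b hφ,
    (pair_split r a b ha hb hφ hη (Submodule.zero_mem _) h2).1⟩

lemma Top_Bpair {n : ℕ} {z : Cochain m} (hz : z ∈ Bpair r a b n) : Top a b z ∈ Bm r a b n := by
  cases n with
  | zero => 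
    have : z = 0 := hz
    rw [this, map_zero]; exact Submodule.zero_mem _
  | succ n =>
    obtain ⟨v, hv, rfl⟩ := hz
    obtain ⟨φ, hφ, η, hη, rfl⟩ := Submodule.mem_sup.1 hv
    have hb' : Lop r a (Top a b φ) + Pop r a b η ∈ Cnx m (n+1) b :=
      Submodule.add_mem _ (Lop_mem r a (Top_mem a b hφ)) (Pop_mem r a b ha hb hη)
    rw [Dop_pair r a b ha hb hη, Top_pair r a b ha hb hb', Top_Pop r a b a b ha hb (by omega),
      ← map_neg]
    have := Submodule.neg_mem _ (Top_mem a b hφ)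
    exact ⟨_, this, Dop_b r a b ha hb this⟩

lemma Lop_Zm {n : ℕ} {z : Cochain m} (hz : z ∈ Zm r a b n) : Lop r a z ∈ Zm r a b (n+1) := by
  rw [mem_Zm r a b ha hb] at *
  refine ⟨Lop_mem r a hz.1, ?_⟩
  rw [Pop_Lop r a b ha hb, hz.2, map_zero]

lemma Lop_Bm {n : ℕ} {z : Cochain m} (hz : z ∈ Bm r a b n) : Lop r a z ∈ Bm r a b (n+1) := by
  rw [Bm_eq r a b ha hb] at *
  cases n with
  | zero =>
    have : z = 0 := hz
    rw [this, map_zero]; exact Submodule.zero_mem _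
  | succ n =>
    obtain ⟨v, hv, rfl⟩ := hz
    exact ⟨Lop r a v, Lop_mem r a hv, Pop_Lop r a b ha hb v⟩

noncomputable def al0 (n : ℕ) : Hpair r a b n →ₗ[ℂ] Hm r a b n :=
  Submodule.mapQ _ _ ((Top a b).restrict (fun _ hz => Top_Zpair r a b ha hb hz))
    (fun _ hz => Top_Bpair r a b ha hb hz)

noncomputable def be (n : ℕ) : Hm r a b n →ₗ[ℂ] Hm r a b (n+1) :=
  Submodule.mapQ _ _ ((Lop r a).restrict (fun _ hz => Lop_Zm r a b ha hb hz))
    (fun _ hz => Lop_Bm r a b ha hb hz)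

lemma al0_mk (n : ℕ) (z : Zpair r a b n) : al0 r a b ha hb n (Submodule.Quotient.mk z) =
    Submodule.Quotient.mk ⟨Top a b z, Top_Zpair r a b ha hb z.2⟩ := rfl

lemma be_mk (n : ℕ) (z : Zm r a b n) : be r a b ha hb n (Submodule.Quotient.mk z) =
    Submodule.Quotient.mk ⟨Lop r a z, Lop_Zm r a b ha hb z.2⟩ := rfl

omit ha hb in
lemma io_mk (n : ℕ) (z : Zm r a b n) : iotaHm r a b n (Submodule.Quotient.mk z) =
    Submodule.Quotient.mk ⟨z, Zm_le_Zpair r a b n z.2⟩ := rfl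

lemma al0_ker (n : ℕ) : LinearMap.ker (al0 r a b ha hb n) = Hfhat r a b n := by
  apply le_antisymm
  · intro h hh
    obtain ⟨⟨z, hz⟩, rfl⟩ := Submodule.Quotient.mk_surjective _ h
    rw [LinearMap.mem_ker, al0_mk, Submodule.Quotient.mk_eq_zero] at hh
    replace hh : Top a b z ∈ Bm r a b n := hh
    have hz' := hz
    obtain ⟨h1, h2⟩ := hz'
    obtain ⟨φ, hφ, η, hη, rfl⟩ := Submodule.mem_sup.1 h1
    rw [Top_pair r a b ha hb hη] at hh
    -- find a pair coboundary
    suffices ∃ w ∈ Cnx m n b, φ + η - w ∈ Bpair r a b n ∧ Dop r a b w = 0 by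
      obtain ⟨w, hw, hB, hD⟩ := this
      have hwZ : w ∈ Zm r a b n := ⟨hw, hD⟩
      refine ⟨Submodule.Quotient.mk ⟨w, hwZ⟩, ?_⟩
      rw [io_mk]
      symm
      rw [Submodule.Quotient.eq]
      exact hB
    rw [Bm_eq r a b ha hb] at hh
    cases n with
    | zero =>
      have h0 : Top a b φ = 0 := hh
      have : φ = 0 := by rw [← Top_Top a b hφ, h0, map_zero]
      subst this
      rw [zero_add] at h2 ⊢
      exact ⟨η, hη, by simp, h2⟩
    | succ n =>
      obtain ⟨v, hv, hvφ⟩ := hh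
      have hs := Pop_s r a b ha hb hv hvφ
      rw [Top_Top a b hφ] at hs
      refine ⟨η + Lop r a v, Submodule.add_mem _ hη (Lop_mem r a hv), ?_, ?_⟩
      · refine ⟨- Top b a v, Submodule.neg_mem _ (Submodule.mem_sup_left (Top_mem b a hv)), ?_⟩
        rw [map_neg, hs]; abel
      · have h3 := (pair_split r a b ha hb hφ hη (Submodule.zero_mem _) h2).2
        rw [Dop_b r a b ha hb (Submodule.add_mem _ hη (Lop_mem r a hv)), map_add,
          Pop_Lop r a b ha hb, hvφ, add_comm]
        exact h3
  · rintro _ ⟨h, rfl⟩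
    obtain ⟨z, rfl⟩ := Submodule.Quotient.mk_surjective _ h
    rw [io_mk, LinearMap.mem_ker, al0_mk, Submodule.Quotient.mk_eq_zero]
    change Top a b z ∈ Bm r a b n
    rw [Top_zero a b (ne_ab ha hb).symm z.2.1]
    exact Submodule.zero_mem _

lemma al0_range (n : ℕ) : LinearMap.range (al0 r a b ha hb n) = LinearMap.ker (be r a b ha hb n) := by
  apply le_antisymm
  · rintro _ ⟨h, rfl⟩
    obtain ⟨⟨z, h1, h2⟩, rfl⟩ := Submodule.Quotient.mk_surjective _ h
    rw [al0_mk, LinearMap.mem_ker, be_mk, Submodule.Quotient.mk_eq_zero]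
    change Lop r a (Top a b z) ∈ Bm r a b (n+1)
    obtain ⟨φ, hφ, η, hη, rfl⟩ := Submodule.mem_sup.1 h1
    have h3 := (pair_split r a b ha hb hφ hη (Submodule.zero_mem _) h2).2
    rw [Top_pair r a b ha hb hη, Bm_eq r a b ha hb, eq_neg_of_add_eq_zero_left h3, ← map_neg]
    exact ⟨_, Submodule.neg_mem _ hη, rfl⟩
  · intro h hh
    obtain ⟨⟨u, hu⟩, rfl⟩ := Submodule.Quotient.mk_surjective _ h
    rw [LinearMap.mem_ker, be_mk, Submodule.Quotient.mk_eq_zero] at hh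
    replace hh : Lop r a u ∈ Bm r a b (n+1) := hh
    obtain ⟨v, hv, hvu⟩ := hh
    have hu' := (mem_Zm r a b ha hb).1 hu
    refine ⟨Submodule.Quotient.mk ⟨Top b a u + -v, ?_, ?_⟩, ?_⟩
    · exact Submodule.add_mem_sup (Top_mem b a hu'.1) (Submodule.neg_mem _ hv)
    · change Dop r a b _ = 0
      rw [map_add, Pop_s r a b ha hb hu'.1 hu'.2, map_neg, hvu]; simp
    · rw [al0_mk]
      congr 1
      apply Subtype.ext
      change Top a b _ = u
      rw [Top_pair r a b ha hb (Submodule.neg_mem _ hv), Top_Top b a hu'.1]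

lemma be_range (n : ℕ) : LinearMap.range (be r a b ha hb n) = LinearMap.ker (iotaHm r a b (n+1)) := by
  apply le_antisymm
  · rintro _ ⟨h, rfl⟩
    obtain ⟨⟨u, hu⟩, rfl⟩ := Submodule.Quotient.mk_surjective _ h
    rw [be_mk, LinearMap.mem_ker, io_mk, Submodule.Quotient.mk_eq_zero]
    have hu' := (mem_Zm r a b ha hb).1 hu
    refine ⟨Top b a u, Submodule.mem_sup_left (Top_mem b a hu'.1), ?_⟩
    rw [Pop_s r a b ha hb hu'.1 hu'.2]; simp
  · intro h hh
    obtain ⟨⟨w, hw⟩, rfl⟩ := Submodule.Quotient.mk_surjective _ h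
    rw [LinearMap.mem_ker, io_mk, Submodule.Quotient.mk_eq_zero] at hh
    obtain ⟨v, hv, hvw⟩ := hh
    replace hvw : Dop r a b v = w := hvw
    obtain ⟨φ, hφ, η, hη, rfl⟩ := Submodule.mem_sup.1 hv
    obtain ⟨h3, h4⟩ := pair_split r a b ha hb hφ hη hw.1 hvw
    refine ⟨Submodule.Quotient.mk ⟨Top a b φ, (mem_Zm r a b ha hb).2 ⟨Top_mem a b hφ, h3⟩⟩, ?_⟩
    rw [be_mk, Submodule.Quotient.eq]
    change Lop r a (Top a b φ) - w ∈ Bm r a b (n+1)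
    rw [Bm_eq r a b ha hb, ← h4]
    refine ⟨-η, Submodule.neg_mem _ hη, ?_⟩
    rw [map_neg]; abel

end seq

/-- the exact sequence
`0 → Ĥ^n_e → H^n_m → H^{n+1}_m → Ĥ^{n+1}_f → 0`, where the first map sends the class of a
`D`-cocycle `φ + η` to the class of `τ(φ)`, the second is induced by `λ^{e₁} + ρ^{e₁}`, and
the third is the natural surjection onto `Ĥ^{n+1}_f`; consequently
`dim Ĥ^{n+1}_f = dim Ĥ^n_e + (r+s−2)(r+s−1)^n`. -/
theorem exact_sequence (r s : ℕ) (hr : 1 ≤ r) (hs : 1 ≤ s)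
    (e1 fs : Fin (r + s)) (he1 : (e1 : ℕ) = 0) (hfs : (fs : ℕ) = r + s - 1) :
    ∀ n : ℕ,
      ∃ (α : Hehat r e1 fs n →ₗ[ℂ] Hm r e1 fs n)
        (β : Hm r e1 fs n →ₗ[ℂ] Hm r e1 fs (n + 1))
        (γ : Hm r e1 fs (n + 1) →ₗ[ℂ] Hfhat r e1 fs (n + 1)),
        Function.Injective α ∧
        LinearMap.range α = LinearMap.ker β ∧
        LinearMap.range β = LinearMap.ker γ ∧
        Function.Surjective γ ∧
        (∀ z : Zpair r e1 fs n, ∃ w : Zm r e1 fs n,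
          (w : Cochain (r + s)) = tau e1 fs (projOut e1 (z : Cochain (r + s))) ∧
          α (Submodule.Quotient.mk (Submodule.Quotient.mk z)) = Submodule.Quotient.mk w) ∧
        (∀ w : Zm r e1 fs n, ∃ w' : Zm r e1 fs (n + 1),
          (w' : Cochain (r + s)) = (lam [e1] + rho r [e1]) (w : Cochain (r + s)) ∧
          β (Submodule.Quotient.mk w) = Submodule.Quotient.mk w') ∧
        (∀ h : Hm r e1 fs (n + 1), (γ h : Hpair r e1 fs (n + 1)) = iotaHm r e1 fs (n + 1) h) ∧
        Module.finrank ℂ (Hfhat r e1 fs (n + 1)) =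
          Module.finrank ℂ (Hehat r e1 fs n) + (r + s - 2) * (r + s - 1) ^ n := by
  intro n
  have ha : par r e1 = 0 := by rw [par, if_pos]; omega
  have hb : par r fs = 1 := by rw [par, if_neg]; omega
  have hfin := fun k => (finrank_Hm r e1 fs ha hb (by omega) k).1
  have hdim := fun k => (finrank_Hm r e1 fs ha hb (by omega) k).2
  have hk := al0_ker r e1 fs ha hb n
  let α : Hehat r e1 fs n →ₗ[ℂ] Hm r e1 fs n :=
    (Hfhat r e1 fs n).liftQ (al0 r e1 fs ha hb n) hk.ge
  have hαi : Function.Injective α := by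
    rw [← LinearMap.ker_eq_bot]
    exact Submodule.ker_liftQ_eq_bot _ _ _ hk.le
  have hαr : LinearMap.range α = LinearMap.ker (be r e1 fs ha hb n) := by
    rw [← al0_range]
    exact Submodule.range_liftQ _ _ _
  have hγr : LinearMap.range (be r e1 fs ha hb n) =
      LinearMap.ker (iotaHm r e1 fs (n+1)).rangeRestrict := by
    rw [LinearMap.ker_rangeRestrict, be_range]
  refine ⟨α, be r e1 fs ha hb n, (iotaHm r e1 fs (n+1)).rangeRestrict, hαi, hαr, hγr,
    LinearMap.surjective_rangeRestrict _, fun z => ⟨_, rfl, al0_mk r e1 fs ha hb n z⟩,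
    fun w => ⟨_, rfl, be_mk r e1 fs ha hb n w⟩, fun _ => rfl, ?_⟩
  have h1 := LinearMap.finrank_range_of_inj hαi
  have h2 := LinearMap.finrank_range_add_finrank_ker (be r e1 fs ha hb n)
  have h3 := LinearMap.finrank_range_add_finrank_ker (iotaHm r e1 fs (n+1))
  rw [hαr] at h1
  rw [hdim] at h2 h3
  rw [← be_range r e1 fs ha hb] at h3
  change Module.finrank ℂ (LinearMap.range (iotaHm r e1 fs (n+1))) = _
  obtain ⟨k, hk⟩ : ∃ k, r + s = k + 2 := ⟨r + s - 2, by omega⟩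
  have e1 : r + s - 1 = k + 1 := by omega
  have e2 : r + s - 2 = k := by omega
  rw [e1] at h2 h3
  rw [e1, e2]
  have e3 : (k+1)^(n+1) = k * (k+1)^n + (k+1)^n := by ring
  omega



end NilpotentCohomology
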